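/- Let f = x³ + y⁴ − u^{12} − v² ∈ R = ℂ[u,v,x,y]. Let (d⁰, d¹) be a pair of 2×2 matrices over R with d¹·d⁰ = f·1 and d⁰·d¹ = f·1, and suppose: (grading) there exist rational numbers α₁, α₂, β₁, β₂ such that for all i, j the (i,j) entry of d¹ is weighted homogeneous of degree 1 + α_j − β_i and the (i,j) entry of d⁰ is weighted homogeneous of degree 1 + β_j − α_i, for the weights w(u) = 1/6, w(v) = 1, w(x) = 2/3, w(y) = 1/2; (boundary) substituting u = 0 gives d¹|_{u=0} = [[y² − v, −x], [x², y² + v]] and d⁰|_{u=0} = [[y² + v, x], [−x², y² − v]]; (non-degeneracy) writing d = [[0, d¹], [d⁰, 0]] and S = str(∂_u d · ∂_v d · ∂_x d · ∂_y d), both the coefficient of x¹y² (in the variables x, y) of S and the coefficient of u^{10}v⁰ (in the variables u, v) of S are non-zero, i.e. both quantum dimensions are non-zero. Then there exist s, t ∈ ℂ with t² = 1/3 and s^{12} = −576(26t − 15), and invertible 2×2 matrices P, Q over R, such that P·d¹·Q equals the matrix [[y² − v + (1/2)x(su)² + ((2t+1)/8)(su)⁶, −x + y(su) + ((t+1)/4)(su)⁴],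 [x² + yx(su) + (t/4)x(su)⁴ + ((2t+1)/4)y(su)⁵ − ((9t+5)/48)(su)⁸, y² + v + (1/2)x(su)² + ((2t+1)/8)(su)⁶]]. -/

import Mathlib

/-!
Write `d¹ = [[A, B], [C, D]]`. The boundary condition pins down the degrees of all entries, so each
entry is a combination of the few monomials of its degree (`whom_four`, `whom_six`, `whom_eight`).
Comparing the terms containing `v` in the upper right entry of `d¹ d⁰ = f` gives `d⁰₀₁ = -B`, whence
`d⁰` is the adjugate of `d¹` and the whole problem is `A D - B C = f`.

One row operation and one column operation by multiples of `u²` remove the terms `u² y²` and `u² v`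
of `C`. Afterwards, comparing coefficients in `A D - B C = f` (`core`) expresses everything through
the coefficients `b₁, b₂` of `u y` and `u⁴` in `B`, which satisfy
`b₁ (3 b₂² - (3/2) b₁⁴ b₂ + b₁⁸ / 8) = 0` and one further equation. If `b₁ ≠ 0`, put `s = b₁` and
`t = 4 b₂ / b₁⁴ - 1`: the two equations become `t² = 1/3` and `s¹² = -576 (26 t - 15)`.
If `b₁ = 0`, all entries are even in `y`, hence the supertrace, which contains exactly one
`y`-derivative, is odd in `y` and its coefficients at `x y²` vanish (`coeff_str_eq_zero`): the
left quantum dimension is zero.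
-/


open MvPolynomial

noncomputable section

/-- The polynomial ring `R = ℂ[u,v,x,y]`. -/
abbrev R4 : Type := MvPolynomial (Fin 4) ℂ

def u : R4 := X 0
def v : R4 := X 1
def x : R4 := X 2
def y : R4 := X 3

/-- The exponent vector of the monomial `u^a v^b x^c y^e`. -/
def mon (a b c e : ℕ) : Fin 4 →₀ ℕ :=
  Finsupp.single 0 a + Finsupp.single 1 b + Finsupp.single 2 c + Finsupp.single 3 e

/-- A polynomial is weighted homogeneous of degree `q` for the weights `w`. -/
def WHom (w : Fin 4 → ℚ) (q : ℚ) (p : R4) : Prop :=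
  ∀ m ∈ p.support, (∑ i : Fin 4, (m i : ℚ) * w i) = q

/-- Entrywise partial derivative of a matrix of polynomials. -/
def pd {m n : Type} (i : Fin 4) (M : Matrix m n R4) : Matrix m n R4 :=
  M.map fun p => pderiv i p

/-- The supertrace of a `2r × 2r` block matrix. -/
def str {r : ℕ} (M : Matrix (Fin r ⊕ Fin r) (Fin r ⊕ Fin r) R4) : R4 :=
  Matrix.trace M.toBlocks₁₁ - Matrix.trace M.toBlocks₂₂

/-- The substitution `u ↦ 0` (keeping `v, x, y`). -/
def setU0 : R4 →ₐ[ℂ] R4 := aeval fun i => if i = 0 then 0 else X i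

/-- The matrix `d¹` of the E₆ orbifold equivalence. -/
def dE6 (s t : ℂ) : Matrix (Fin 2) (Fin 2) R4 :=
  !![y ^ 2 - v + C (1/2 : ℂ) * x * (C s * u) ^ 2 + C ((2*t+1)/8) * (C s * u) ^ 6,
     -x + y * (C s * u) + C ((t+1)/4) * (C s * u) ^ 4;
     x ^ 2 + y * x * (C s * u) + C (t/4) * x * (C s * u) ^ 4
       + C ((2*t+1)/4) * y * (C s * u) ^ 5 - C ((9*t+5)/48) * (C s * u) ^ 8,
     y ^ 2 + v + C (1/2 : ℂ) * x * (C s * u) ^ 2 + C ((2*t+1)/8) * (C s * u) ^ 6]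

/-! ### Coefficients of monomials -/

lemma mon_inj {a b c e a' b' c' e' : ℕ} :
    mon a b c e = mon a' b' c' e' ↔ a = a' ∧ b = b' ∧ c = c' ∧ e = e' := by
  constructor
  · intro h
    have h0 := DFunLike.congr_fun h 0
    have h1 := DFunLike.congr_fun h 1
    have h2 := DFunLike.congr_fun h 2
    have h3 := DFunLike.congr_fun h 3
    simp [mon] at h0 h1 h2 h3
    exact ⟨h0, h1, h2, h3⟩
  · rintro ⟨rfl, rfl, rfl, rfl⟩
    rfl

lemma eq_mon (m : Fin 4 →₀ ℕ) : m = mon (m 0) (m 1) (m 2) (m 3) := by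
  ext i
  fin_cases i <;> simp [mon]

/-- The term `k u^a v^b x^c y^e`. -/
def term (k : ℂ) (a b c e : ℕ) : R4 := C k * (u ^ a * v ^ b * x ^ c * y ^ e)

lemma term_eq_monomial (k : ℂ) (a b c e : ℕ) : term k a b c e = monomial (mon a b c e) k := by
  rw [term, u, v, x, y, X_pow_eq_monomial, X_pow_eq_monomial, X_pow_eq_monomial,
    X_pow_eq_monomial, monomial_mul, monomial_mul, monomial_mul, C_mul_monomial, mon]
  simp

lemma coeff_term (k : ℂ) (a b c e a' b' c' e' : ℕ) :
    coeff (mon a' b' c' e') (term k a b c e) =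
      if a = a' ∧ b = b' ∧ c = c' ∧ e = e' then k else 0 := by
  rw [term_eq_monomial, coeff_monomial]
  simp only [mon_inj]

/-! ### Entries of given degree -/

lemma coeff_setU0 (b c e : ℕ) (p : R4) :
    coeff (mon 0 b c e) (setU0 p) = coeff (mon 0 b c e) p := by
  induction p using MvPolynomial.induction_on' with
  | monomial m k =>
    rw [eq_mon m, ← term_eq_monomial, coeff_term]
    generalize m 0 = a'
    have hs : setU0 (term k a' (m 1) (m 2) (m 3))
        = term (if a' = 0 then k else 0) 0 (m 1) (m 2) (m 3) := by
      rcases Nat.eq_zero_or_pos a' with rfl | h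
      · simp [setU0, term, u, v, x, y, algHom_C]
      · simp [setU0, term, u, v, x, y, h.ne', algHom_C]
    rw [hs, coeff_term]
    split_ifs <;> simp_all
  | add p q hp hq => simp [hp, hq]

/-- The weighted degree, multiplied by 6 to be integral, of each monomial that occurs. -/
lemma WHom.degree_eq {q : ℚ} {p : R4} (h : WHom ![1/6, 1, 2/3, 1/2] q p) {a b c e : ℕ}
    (hc : coeff (mon a b c e) p ≠ 0) : (a : ℚ) + 6 * b + 4 * c + 3 * e = 6 * q := by
  have := h _ (mem_support_iff.mpr hc)
  simp [Fin.sum_univ_four, mon] at this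
  linarith

lemma WHom.coeff_eq_zero {q : ℚ} {p : R4} (h : WHom ![1/6, 1, 2/3, 1/2] q p) {n : ℕ}
    (hn : 6 * q = n) {a b c e : ℕ} (hw : a + 6 * b + 4 * c + 3 * e ≠ n) :
    coeff (mon a b c e) p = 0 := by
  by_contra hc
  have := h.degree_eq hc
  rw [hn] at this
  exact hw (by exact_mod_cast this)

lemma ext_mon {p q : R4} (h : ∀ a b c e, coeff (mon a b c e) p = coeff (mon a b c e) q) :
    p = q := by
  ext m
  rw [eq_mon m]
  exact h _ _ _ _

lemma whom_four {q : ℚ} {p : R4} (h : WHom ![1/6, 1, 2/3, 1/2] q p) (hq : 6 * q = (4 : ℕ)) :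
    p = term (coeff (mon 0 0 1 0) p) 0 0 1 0 + term (coeff (mon 1 0 0 1) p) 1 0 0 1
      + term (coeff (mon 4 0 0 0) p) 4 0 0 0 := by
  refine ext_mon fun a b c e => ?_
  by_cases hw : a + 6 * b + 4 * c + 3 * e = 4
  · have hb : b ≤ 0 := by omega
    have hc : c ≤ 1 := by omega
    have he : e ≤ 1 := by omega
    obtain rfl : a = 4 - 6 * b - 4 * c - 3 * e := by omega
    interval_cases b
    interval_cases c <;> interval_cases e <;>
      first
      | omega
      | simp [coeff_term]
  · rw [h.coeff_eq_zero hq hw]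
    simp only [coeff_add, coeff_term]
    repeat rw [if_neg (by omega)]
    simp

lemma whom_six {q : ℚ} {p : R4} (h : WHom ![1/6, 1, 2/3, 1/2] q p) (hq : 6 * q = (6 : ℕ)) :
    p = term (coeff (mon 0 0 0 2) p) 0 0 0 2 + term (coeff (mon 0 1 0 0) p) 0 1 0 0
      + term (coeff (mon 2 0 1 0) p) 2 0 1 0 + term (coeff (mon 3 0 0 1) p) 3 0 0 1
      + term (coeff (mon 6 0 0 0) p) 6 0 0 0 := by
  refine ext_mon fun a b c e => ?_
  by_cases hw : a + 6 * b + 4 * c + 3 * e = 6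
  · have hb : b ≤ 1 := by omega
    have hc : c ≤ 1 := by omega
    have he : e ≤ 2 := by omega
    obtain rfl : a = 6 - 6 * b - 4 * c - 3 * e := by omega
    interval_cases b <;> interval_cases c <;> interval_cases e <;>
      first
      | omega
      | simp [coeff_term]
  · rw [h.coeff_eq_zero hq hw]
    simp only [coeff_add, coeff_term]
    repeat rw [if_neg (by omega)]
    simp

lemma whom_eight {q : ℚ} {p : R4} (h : WHom ![1/6, 1, 2/3, 1/2] q p) (hq : 6 * q = (8 : ℕ)) :
    p = term (coeff (mon 0 0 2 0) p) 0 0 2 0 + term (coeff (mon 1 0 1 1) p) 1 0 1 1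
      + term (coeff (mon 4 0 1 0) p) 4 0 1 0 + term (coeff (mon 2 0 0 2) p) 2 0 0 2
      + term (coeff (mon 2 1 0 0) p) 2 1 0 0 + term (coeff (mon 5 0 0 1) p) 5 0 0 1
      + term (coeff (mon 8 0 0 0) p) 8 0 0 0 := by
  refine ext_mon fun a b c e => ?_
  by_cases hw : a + 6 * b + 4 * c + 3 * e = 8
  · have hb : b ≤ 1 := by omega
    have hc : c ≤ 2 := by omega
    have he : e ≤ 2 := by omega
    obtain rfl : a = 8 - 6 * b - 4 * c - 3 * e := by omega
    interval_cases b <;> interval_cases c <;> interval_cases e <;>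
      first
      | omega
      | simp [coeff_term]
  · rw [h.coeff_eq_zero hq hw]
    simp only [coeff_add, coeff_term]
    repeat rw [if_neg (by omega)]
    simp

/-! ### Parity in `y` -/

/-- The substitution `y ↦ -y`. -/
def negY : R4 →ₐ[ℂ] R4 := aeval fun i => if i = 3 then -X i else X i

lemma negY_C (k : ℂ) : negY (C k) = C k := algHom_C _ _

lemma negY_u : negY u = u := by simp [negY, u]
lemma negY_v : negY v = v := by simp [negY, v]
lemma negY_x : negY x = x := by simp [negY, x]
lemma negY_y : negY y = -y := by simp [negY, y]

lemma coeff_negY (a b c e : ℕ) (p : R4) :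
    coeff (mon a b c e) (negY p) = (-1) ^ e * coeff (mon a b c e) p := by
  induction p using MvPolynomial.induction_on' with
  | monomial m k =>
    rw [eq_mon m, ← term_eq_monomial, coeff_term]
    have hs : negY (term k (m 0) (m 1) (m 2) (m 3))
        = term ((-1) ^ (m 3) * k) (m 0) (m 1) (m 2) (m 3) := by
      simp only [term, map_mul, map_pow, negY_C, negY_u, negY_v, negY_x, negY_y, map_neg, map_one]
      rw [neg_pow]
      ring
    rw [hs, coeff_term]
    split_ifs with h
    · rw [h.2.2.2]
    · simp
  | add p q hp hq => simp [hp, hq, mul_add]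

lemma negY_pderiv (i : Fin 4) (p : R4) :
    negY (pderiv i p) = (if i = 3 then -1 else 1) * pderiv i (negY p) := by
  induction p using MvPolynomial.induction_on with
  | C k => simp
  | add p q hp hq => simp only [map_add, hp, hq, mul_add]
  | mul_X p j hp =>
    rw [pderiv_mul, map_add, map_mul, map_mul, map_mul, pderiv_mul, hp]
    have hX : negY (pderiv i (X j)) = (if i = 3 then -1 else 1) * pderiv i (negY (X j)) := by
      by_cases hij : j = i
      · subst hij
        by_cases h3 : j = 3 <;> simp [negY, h3]
      · have h0 : pderiv i (X j : R4) = 0 := pderiv_X_of_ne hij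
        by_cases h3 : j = 3
        · subst h3
          simp [negY, h0]
        · simp [negY, h0, h3]
    rw [hX]
    ring

lemma map_pd_negY {r : ℕ} (i : Fin 4) (M : Matrix (Fin r ⊕ Fin r) (Fin r ⊕ Fin r) R4)
    (hM : M.map negY = M) :
    (pd i M).map negY = (if i = 3 then -1 else 1 : R4) • pd i M := by
  ext1 k l
  have h : negY (M k l) = M k l := congrFun (congrFun hM k) l
  simp only [pd, Matrix.map_apply, Matrix.smul_apply, smul_eq_mul]
  rw [negY_pderiv, h]

lemma str_map_negY {r : ℕ} (M : Matrix (Fin r ⊕ Fin r) (Fin r ⊕ Fin r) R4) :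
    str (M.map negY) = negY (str M) := by
  simp [str, Matrix.trace, Matrix.toBlocks₁₁, Matrix.toBlocks₂₂]

/-- For a twisted differential even in `y` the supertrace is odd in `y`. -/
lemma coeff_str_eq_zero {r : ℕ} (M : Matrix (Fin r ⊕ Fin r) (Fin r ⊕ Fin r) R4)
    (hM : M.map negY = M) (a b : ℕ) :
    coeff (mon a b 1 2) (str (pd 0 M * pd 1 M * pd 2 M * pd 3 M)) = 0 := by
  have h : negY (str (pd 0 M * pd 1 M * pd 2 M * pd 3 M))
      = -str (pd 0 M * pd 1 M * pd 2 M * pd 3 M) := by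
    rw [← str_map_negY, Matrix.map_mul, Matrix.map_mul, Matrix.map_mul, map_pd_negY 0 M hM,
      map_pd_negY 1 M hM, map_pd_negY 2 M hM, map_pd_negY 3 M hM]
    simp [str, Matrix.trace, Matrix.toBlocks₁₁, Matrix.toBlocks₂₂]
    ring
  have h2 := coeff_negY a b 1 2 (str (pd 0 M * pd 1 M * pd 2 M * pd 3 M))
  rw [h, coeff_neg] at h2
  linear_combination (-1 / 2 : ℂ) * h2

/-! ### The coefficient equations -/

/-- The equations obtained by comparing coefficients in `A D - B C = f` when `C` has no terms
`u² y²` and `u² v`. -/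
lemma core {a₁ a₂ a₃ b₁ b₂ c₁ c₂ c₅ c₆ e₁ e₂ e₃ : ℂ}
    (h : (y ^ 2 - v + C a₁ * x * u ^ 2 + C a₂ * y * u ^ 3 + C a₃ * u ^ 6)
        * (y ^ 2 + v + C e₁ * x * u ^ 2 + C e₂ * y * u ^ 3 + C e₃ * u ^ 6)
        - (-x + C b₁ * y * u + C b₂ * u ^ 4)
        * (x ^ 2 + C c₁ * x * y * u + C c₂ * x * u ^ 4 + C c₅ * y * u ^ 5 + C c₆ * u ^ 8)
      = x ^ 3 + y ^ 4 - u ^ 12 - v ^ 2) :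
    e₁ = a₁ ∧ e₂ = a₂ ∧ e₃ = a₃ ∧ a₂ = 0 ∧ 2 * a₁ = b₁ * c₁ ∧ 2 * a₃ = b₁ * c₅ ∧ c₁ = b₁ ∧
      a₁ ^ 2 + c₂ - b₂ = 0 ∧ c₅ - b₁ * c₂ - b₂ * c₁ = 0 ∧ 2 * a₁ * a₃ + c₆ - b₂ * c₂ = 0 ∧
      b₁ * c₆ + b₂ * c₅ = 0 ∧ a₃ ^ 2 - b₂ * c₆ = -1 := by
  have key : term (a₁ - e₁) 2 1 1 0 + term (a₂ - e₂) 3 1 0 1 + term (a₃ - e₃) 6 1 0 0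
      + term (a₂ + e₂) 3 0 0 3 + term (a₁ + e₁ - b₁ * c₁) 2 0 1 2
      + term (a₃ + e₃ + a₂ * e₂ - b₁ * c₅) 6 0 0 2 + term (c₁ - b₁) 1 0 2 1
      + term (a₁ * e₁ + c₂ - b₂) 4 0 2 0
      + term (a₁ * e₂ + a₂ * e₁ + c₅ - b₁ * c₂ - b₂ * c₁) 5 0 1 1
      + term (a₁ * e₃ + a₃ * e₁ + c₆ - b₂ * c₂) 8 0 1 0
      + term (a₂ * e₃ + a₃ * e₂ - b₁ * c₆ - b₂ * c₅) 9 0 0 1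
      + term (a₃ * e₃ - b₂ * c₆ + 1) 12 0 0 0 = 0 := by
    simp only [term, map_add, map_sub, map_mul, map_one]
    linear_combination h
  have co : ∀ a b c e, _ := fun a b c e => congrArg (coeff (mon a b c e)) key
  simp only [coeff_add, coeff_term, coeff_zero] at co
  have k1 := co 2 1 1 0
  have k2 := co 3 1 0 1
  have k3 := co 6 1 0 0
  have k4 := co 3 0 0 3
  have k5 := co 2 0 1 2
  have k6 := co 6 0 0 2
  have k7 := co 1 0 2 1
  have k8 := co 4 0 2 0
  have k9 := co 5 0 1 1
  have k10 := co 8 0 1 0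
  have k11 := co 9 0 0 1
  have k12 := co 12 0 0 0
  norm_num at k1 k2 k3 k4 k5 k6 k7 k8 k9 k10 k11 k12
  obtain rfl : e₁ = a₁ := by linear_combination -k1
  obtain rfl : e₂ = a₂ := by linear_combination -k2
  obtain rfl : e₃ = a₃ := by linear_combination -k3
  obtain rfl : e₂ = 0 := by linear_combination k4 / 2
  refine ⟨rfl, rfl, rfl, rfl, ?_, ?_, ?_, ?_, ?_, ?_, ?_, ?_⟩
  · linear_combination k5
  · linear_combination k6
  · linear_combination k7
  · linear_combination k8
  · linear_combination k9
  · linear_combination k10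
  · linear_combination -k11
  · linear_combination k12

/-- Solution of the equations of `core` for `b₁ ≠ 0`: with `s = b₁`, every coefficient is a power
of `s` times its value at `s = 1`. -/
lemma solve {a₁ a₃ b₁ b₂ c₁ c₂ c₅ c₆ : ℂ} (hb : b₁ ≠ 0)
    (h1 : 2 * a₁ = b₁ * c₁) (h2 : 2 * a₃ = b₁ * c₅) (h3 : c₁ = b₁)
    (h4 : a₁ ^ 2 + c₂ - b₂ = 0) (h5 : c₅ - b₁ * c₂ - b₂ * c₁ = 0)
    (h6 : 2 * a₁ * a₃ + c₆ - b₂ * c₂ = 0) (h7 : b₁ * c₆ + b₂ * c₅ = 0)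
    (h8 : a₃ ^ 2 - b₂ * c₆ = -1) :
    ∃ t : ℂ, t ^ 2 = 1 / 3 ∧ b₁ ^ 12 = -576 * (26 * t - 15) ∧ a₁ = 1 / 2 * b₁ ^ 2 ∧
      a₃ = (2 * t + 1) / 8 * b₁ ^ 6 ∧ b₂ = (t + 1) / 4 * b₁ ^ 4 ∧ c₂ = t / 4 * b₁ ^ 4 ∧
      c₅ = (2 * t + 1) / 4 * b₁ ^ 5 ∧ c₆ = -((9 * t + 5) / 48) * b₁ ^ 8 := by
  obtain ⟨t, ht⟩ : ∃ t : ℂ, b₂ = (t + 1) / 4 * b₁ ^ 4 :=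
    ⟨4 * b₂ / b₁ ^ 4 - 1, by field_simp; ring⟩
  have e1 : a₁ = 1 / 2 * b₁ ^ 2 := by rw [h3] at h1; linear_combination h1 / 2
  have e2 : c₂ = t / 4 * b₁ ^ 4 := by rw [e1, ht] at h4; linear_combination h4
  have e5 : c₅ = (2 * t + 1) / 4 * b₁ ^ 5 := by rw [e2, h3, ht] at h5; linear_combination h5
  have e3 : a₃ = (2 * t + 1) / 8 * b₁ ^ 6 := by rw [e5] at h2; linear_combination h2 / 2
  have e6 : c₆ = (t + 1) * t / 16 * b₁ ^ 8 - (2 * t + 1) / 8 * b₁ ^ 8 := by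
    rw [e1, e3, ht, e2] at h6; linear_combination h6
  have ht2 : t ^ 2 = 1 / 3 := by
    have : b₁ ^ 9 * (t ^ 2 - 1 / 3) = 0 := by
      rw [e6, e5, ht] at h7; linear_combination 16 / 3 * h7
    rcases mul_eq_zero.mp this with h | h
    · exact absurd h (pow_ne_zero _ hb)
    · linear_combination h
  have e6' : c₆ = -((9 * t + 5) / 48) * b₁ ^ 8 := by
    rw [e6]; linear_combination b₁ ^ 8 / 16 * ht2
  refine ⟨t, ht2, ?_, e1, e3, ht, e2, e5, e6'⟩
  rw [e3, ht, e6'] at h8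
  -- By `t² = 1/3`, `h8` amounts to `s¹² (15 + 26 t) = -192`, and `(15 + 26 t) (15 - 26 t) = -1/3`.
  have h9 : b₁ ^ 12 * (15 + 26 * t) = -192 := by
    linear_combination 192 * h8 - 21 * b₁ ^ 12 * ht2
  linear_combination (-3 * (15 - 26 * t)) * h9 - 2028 * b₁ ^ 12 * ht2

/-- Since `A` and `D'` have the term `-v`, the equation `A B' + B D' = 0` forces `B' = -B`. -/
lemma offdiag {a₁ a₂ a₃ b₁ b₂ b₁' b₂' e₁ e₂ e₃ : ℂ}
    (h : (y ^ 2 - v + C a₁ * x * u ^ 2 + C a₂ * y * u ^ 3 + C a₃ * u ^ 6)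
        * (x + C b₁' * y * u + C b₂' * u ^ 4)
        + (-x + C b₁ * y * u + C b₂ * u ^ 4)
        * (y ^ 2 - v + C e₁ * x * u ^ 2 + C e₂ * y * u ^ 3 + C e₃ * u ^ 6) = 0) :
    b₁' = -b₁ ∧ b₂' = -b₂ := by
  have key : term (-b₁ - b₁') 1 1 0 1 + term (-b₂ - b₂') 4 1 0 0
      + term (a₁ - e₁) 2 0 2 0 + term (a₂ + a₁ * b₁' - e₂ + b₁ * e₁) 3 0 1 1
      + term (a₃ + a₁ * b₂' - e₃ + b₂ * e₁) 6 0 1 0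
      + term (b₁ + b₁') 1 0 0 3 + term (b₂ + b₂' + a₂ * b₁' + b₁ * e₂) 4 0 0 2
      + term (a₃ * b₁' + a₂ * b₂' + b₁ * e₃ + b₂ * e₂) 7 0 0 1
      + term (a₃ * b₂' + b₂ * e₃) 10 0 0 0 = 0 := by
    simp only [term, map_add, map_sub, map_mul, map_neg]
    linear_combination h
  have co : ∀ a b c e, _ := fun a b c e => congrArg (coeff (mon a b c e)) key
  simp only [coeff_add, coeff_term, coeff_zero] at co
  have k1 := co 1 1 0 1
  have k2 := co 4 1 0 0
  norm_num at k1 k2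
  exact ⟨by linear_combination -k1, by linear_combination -k2⟩

/-! ### Shape of the factorisation -/

lemma term_v (k : ℂ) : term k 0 1 0 0 = C k * v := by simp [term]
lemma term_x (k : ℂ) : term k 0 0 1 0 = C k * x := by simp [term]

lemma y2_eq : y ^ 2 = term 1 0 0 0 2 := by simp [term]
lemma x2_eq : x ^ 2 = term 1 0 0 2 0 := by simp [term]

/-- An entry of degree 6 (in units of `1/6`) with boundary value `y² + ε v`. -/
lemma shape_six {q : ℚ} {p : R4} (h : WHom ![1/6, 1, 2/3, 1/2] q p) {ε : ℂ}
    (hb : setU0 p = y ^ 2 + C ε * v) : ∃ a₁ a₂ a₃ : ℂ,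
      p = y ^ 2 + C ε * v + C a₁ * x * u ^ 2 + C a₂ * y * u ^ 3 + C a₃ * u ^ 6 := by
  have hco : ∀ b c e, coeff (mon 0 b c e) p = coeff (mon 0 b c e) (y ^ 2 + C ε * v) := by
    intro b c e
    rw [← coeff_setU0, hb]
  have h1 : coeff (mon 0 0 0 2) p = 1 := by
    rw [hco, y2_eq, ← term_v]; simp [coeff_term]
  have h2 : coeff (mon 0 1 0 0) p = ε := by
    rw [hco, y2_eq, ← term_v]; simp [coeff_term]
  have hq : 6 * q = (6 : ℕ) := by
    rw [← h.degree_eq (a := 0) (b := 0) (c := 0) (e := 2) (by rw [h1]; exact one_ne_zero)]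
    norm_num
  refine ⟨coeff (mon 2 0 1 0) p, coeff (mon 3 0 0 1) p, coeff (mon 6 0 0 0) p, ?_⟩
  conv_lhs => rw [whom_six h hq, h1, h2]
  simp only [term, map_one]
  ring

/-- An entry of degree 4 (in units of `1/6`) with boundary value `ε x`. -/
lemma shape_four {q : ℚ} {p : R4} (h : WHom ![1/6, 1, 2/3, 1/2] q p) {ε : ℂ} (hε : ε ≠ 0)
    (hb : setU0 p = C ε * x) : ∃ b₁ b₂ : ℂ,
      p = C ε * x + C b₁ * y * u + C b₂ * u ^ 4 := by
  have h1 : coeff (mon 0 0 1 0) p = ε := by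
    rw [← coeff_setU0, hb, ← term_x]; simp [coeff_term]
  have hq : 6 * q = (4 : ℕ) := by
    rw [← h.degree_eq (a := 0) (b := 0) (c := 1) (e := 0) (by rw [h1]; exact hε)]
    norm_num
  refine ⟨coeff (mon 1 0 0 1) p, coeff (mon 4 0 0 0) p, ?_⟩
  conv_lhs => rw [whom_four h hq, h1]
  simp only [term]
  ring

/-- An entry of degree 8 (in units of `1/6`) with boundary value `x²`. -/
lemma shape_eight {q : ℚ} {p : R4} (h : WHom ![1/6, 1, 2/3, 1/2] q p)
    (hb : setU0 p = x ^ 2) : ∃ c₁ c₂ c₃ c₄ c₅ c₆ : ℂ,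
      p = x ^ 2 + C c₁ * x * y * u + C c₂ * x * u ^ 4 + C c₃ * y ^ 2 * u ^ 2 + C c₄ * v * u ^ 2
        + C c₅ * y * u ^ 5 + C c₆ * u ^ 8 := by
  have h1 : coeff (mon 0 0 2 0) p = 1 := by
    rw [← coeff_setU0, hb, x2_eq]; simp [coeff_term]
  have hq : 6 * q = (8 : ℕ) := by
    rw [← h.degree_eq (a := 0) (b := 0) (c := 2) (e := 0) (by rw [h1]; exact one_ne_zero)]
    norm_num
  refine ⟨coeff (mon 1 0 1 1) p, coeff (mon 4 0 1 0) p, coeff (mon 2 0 0 2) p,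
    coeff (mon 2 1 0 0) p, coeff (mon 5 0 0 1) p, coeff (mon 8 0 0 0) p, ?_⟩
  conv_lhs => rw [whom_eight h hq, h1]
  simp only [term, map_one]
  ring

lemma isUnit_lower (p : R4) : IsUnit (!![1, 0; p, 1] : Matrix (Fin 2) (Fin 2) R4) := by
  rw [Matrix.isUnit_iff_isUnit_det, Matrix.det_fin_two_of]
  simp

theorem stmt10 (d0 d1 : Matrix (Fin 2) (Fin 2) R4)
    (hmf1 : d1 * d0
      = (x ^ 3 + y ^ 4 - u ^ 12 - v ^ 2) • (1 : Matrix (Fin 2) (Fin 2) R4))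
    (hmf2 : d0 * d1
      = (x ^ 3 + y ^ 4 - u ^ 12 - v ^ 2) • (1 : Matrix (Fin 2) (Fin 2) R4))
    (hgr : ∃ α β : Fin 2 → ℚ, ∀ i j,
        WHom ![1/6, 1, 2/3, 1/2] (1 + α j - β i) (d1 i j) ∧
        WHom ![1/6, 1, 2/3, 1/2] (1 + β j - α i) (d0 i j))
    (hbd1 : d1.map setU0 = !![y ^ 2 - v, -x; x ^ 2, y ^ 2 + v])
    (hbd0 : d0.map setU0 = !![y ^ 2 + v, x; -(x ^ 2), y ^ 2 - v])
    (hnd1 : ∃ a b : ℕ, coeff (mon a b 1 2)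
        (str (pd 0 (Matrix.fromBlocks 0 d1 d0 0) * pd 1 (Matrix.fromBlocks 0 d1 d0 0)
          * pd 2 (Matrix.fromBlocks 0 d1 d0 0) * pd 3 (Matrix.fromBlocks 0 d1 d0 0))) ≠ 0)
    (hnd2 : ∃ c e : ℕ, coeff (mon 10 0 c e)
        (str (pd 0 (Matrix.fromBlocks 0 d1 d0 0) * pd 1 (Matrix.fromBlocks 0 d1 d0 0)
          * pd 2 (Matrix.fromBlocks 0 d1 d0 0) * pd 3 (Matrix.fromBlocks 0 d1 d0 0))) ≠ 0) :
    ∃ s t : ℂ, t ^ 2 = 1/3 ∧ s ^ 12 = -576 * (26 * t - 15) ∧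
      ∃ P Q : Matrix (Fin 2) (Fin 2) R4, IsUnit P ∧ IsUnit Q ∧
        P * d1 * Q = dE6 s t := by
  obtain ⟨α, β, hg⟩ := hgr
  have hb1 : ∀ i j, setU0 (d1 i j) = _ := fun i j => congrFun (congrFun hbd1 i) j
  have hb0 : ∀ i j, setU0 (d0 i j) = _ := fun i j => congrFun (congrFun hbd0 i) j
  have hm1 : ∀ i j, (d1 * d0) i j = _ := fun i j => congrFun (congrFun hmf1 i) j
  have hm2 : ∀ i j, (d0 * d1) i j = _ := fun i j => congrFun (congrFun hmf2 i) j
  obtain ⟨a₁, a₂, a₃, hA⟩ := shape_six (ε := -1) (hg 0 0).1 (by rw [hb1]; simp; ring)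
  obtain ⟨e₁, e₂, e₃, hD⟩ := shape_six (ε := 1) (hg 1 1).1 (by rw [hb1]; simp)
  obtain ⟨e₁', e₂', e₃', hD'⟩ := shape_six (ε := -1) (hg 1 1).2 (by rw [hb0]; simp; ring)
  obtain ⟨b₁, b₂, hB⟩ := shape_four (ε := -1) (hg 0 1).1 (by norm_num) (by rw [hb1]; simp)
  obtain ⟨b₁', b₂', hB'⟩ := shape_four (ε := 1) (hg 0 1).2 (by norm_num) (by rw [hb0]; simp)
  obtain ⟨c₁, c₂, c₃, c₄, c₅, c₆, hC⟩ := shape_eight (hg 1 0).1 (by rw [hb1]; simp)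
  simp only [map_neg, map_one, one_mul, neg_mul] at hA hB hD hB' hD'
  have m01 := hm1 0 1
  have m00 := hm1 0 0
  have n01 := hm2 0 1
  have n00 := hm2 0 0
  simp [Matrix.mul_apply, Fin.sum_univ_two] at m01 m00 n01 n00
  have hB'' : d0 0 1 = -d1 0 1 := by
    obtain ⟨h1, h2⟩ := offdiag (a₁ := a₁) (a₂ := a₂) (a₃ := a₃) (b₁ := b₁) (b₂ := b₂)
      (b₁' := b₁') (b₂' := b₂') (e₁ := e₁') (e₂ := e₂') (e₃ := e₃') (by
        rw [hA, hB, hB', hD'] at m01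
        linear_combination m01)
    rw [hB', hB, h1, h2]
    simp only [map_neg]
    ring
  have hB0 : d1 0 1 ≠ 0 := by
    intro h0
    have := hb1 0 1
    rw [h0] at this
    simp [x] at this
  have hDA : d0 1 1 = d1 0 0 := by
    apply mul_left_cancel₀ hB0
    rw [hB''] at m01
    linear_combination m01
  have hAD : d0 0 0 = d1 1 1 := by
    apply mul_left_cancel₀ hB0
    rw [hB''] at n01
    linear_combination n01
  have hCC : d0 1 0 = -d1 1 0 := by
    apply mul_left_cancel₀ hB0
    rw [hB''] at n00
    linear_combination m00 - n00
  have hdet : d1 0 0 * d1 1 1 - d1 0 1 * d1 1 0 = x ^ 3 + y ^ 4 - u ^ 12 - v ^ 2 := by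
    rw [hAD, hCC] at m00
    linear_combination m00
  -- Adding `l u²` times the first row to the second and `m u²` times the second column to the
  -- first cancels the terms `u² y²` and `u² v` of the lower left entry.
  obtain ⟨l, hl⟩ : ∃ l, l = (c₄ - c₃) / 2 := ⟨_, rfl⟩
  obtain ⟨m, hm⟩ : ∃ m, m = -(c₃ + c₄) / 2 := ⟨_, rfl⟩
  obtain rfl : c₃ = -l - m := by rw [hl, hm]; ring
  obtain rfl : c₄ = l - m := by linear_combination -2 * hl
  have hA2 : d1 0 0 + C m * u ^ 2 * d1 0 1 = y ^ 2 - v + C (a₁ - m) * x * u ^ 2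
      + C (a₂ + m * b₁) * y * u ^ 3 + C (a₃ + m * b₂) * u ^ 6 := by
    rw [hA, hB]; simp only [map_add, map_sub, map_mul]; ring
  have hD2 : d1 1 1 + C l * u ^ 2 * d1 0 1 = y ^ 2 + v + C (e₁ - l) * x * u ^ 2
      + C (e₂ + l * b₁) * y * u ^ 3 + C (e₃ + l * b₂) * u ^ 6 := by
    rw [hD, hB]; simp only [map_add, map_sub, map_mul]; ring
  have hC2 : d1 1 0 + C l * u ^ 2 * d1 0 0 + C m * u ^ 2 * d1 1 1
        + C l * C m * u ^ 4 * d1 0 1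
      = x ^ 2 + C c₁ * x * y * u + C (c₂ + l * a₁ + m * e₁ - l * m) * x * u ^ 4
        + C (c₅ + l * a₂ + m * e₂ + l * m * b₁) * y * u ^ 5
        + C (c₆ + l * a₃ + m * e₃ + l * m * b₂) * u ^ 8 := by
    rw [hA, hB, hC, hD]; simp only [map_add, map_sub, map_mul, map_neg]; ring
  have hdet2 : (d1 0 0 + C m * u ^ 2 * d1 0 1) * (d1 1 1 + C l * u ^ 2 * d1 0 1)
      - d1 0 1 * (d1 1 0 + C l * u ^ 2 * d1 0 0 + C m * u ^ 2 * d1 1 1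
        + C l * C m * u ^ 4 * d1 0 1) = x ^ 3 + y ^ 4 - u ^ 12 - v ^ 2 := by
    linear_combination hdet
  rw [hA2, hD2, hC2, hB] at hdet2
  obtain ⟨k1, k2, k3, k4, k5, k6, k7, k8, k9, k10, k11, k12⟩ := core hdet2
  rw [k1] at hD2
  rw [k2, k4] at hD2
  rw [k3] at hD2
  rw [k4] at hA2
  rw [k7] at hC2
  have hb1_ne : b₁ ≠ 0 := by
    intro hb
    subst hb
    have k9' : c₅ + l * a₂ + m * e₂ + l * m * 0 = 0 := by
      rw [k7] at k9; linear_combination k9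
    rw [k9'] at hC2
    have sB : negY (d1 0 1) = d1 0 1 := by
      rw [hB]
      simp only [map_add, map_mul, map_neg, map_pow, negY_C, negY_u, negY_x, negY_y, map_zero]
      ring
    have sA : negY (d1 0 0) = d1 0 0 := by
      rw [eq_sub_of_add_eq hA2]
      simp only [map_add, map_sub, map_mul, map_pow, negY_C, negY_u, negY_v, negY_x, negY_y,
        map_zero, sB]
      ring
    have sD : negY (d1 1 1) = d1 1 1 := by
      rw [eq_sub_of_add_eq hD2]
      simp only [map_add, map_sub, map_mul, map_pow, negY_C, negY_u, negY_v, negY_x, negY_y,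
        map_zero, sB]
      ring
    have sC : negY (d1 1 0) = d1 1 0 := by
      rw [eq_sub_of_add_eq (eq_sub_of_add_eq (eq_sub_of_add_eq hC2))]
      simp only [map_add, map_sub, map_mul, map_pow, negY_C, negY_u, negY_x, negY_y,
        map_zero, sA, sB, sD]
      ring
    obtain ⟨a, b, hab⟩ := hnd1
    refine hab (coeff_str_eq_zero _ ?_ a b)
    have s1 : d1.map negY = d1 := by
      ext1 i j
      fin_cases i <;> fin_cases j <;> simp [sA, sB, sC, sD]
    have s0 : d0.map negY = d0 := by
      ext1 i j
      fin_cases i <;> fin_cases j <;> simp [hAD, hDA, hCC, hB'', sA, sB, sC, sD]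
    rw [Matrix.fromBlocks_map, s1, s0, Matrix.map_zero _ (map_zero negY)]
  obtain ⟨t, ht, hs, r1, r2, r3, r4, r5, r6⟩ := solve hb1_ne k5 k6 k7 k8 k9 k10 k11 k12
  refine ⟨b₁, t, ht, hs, !![1, 0; C l * u ^ 2, 1], !![1, 0; C m * u ^ 2, 1],
    isUnit_lower _, isUnit_lower _, ?_⟩
  rw [r1, r2] at hA2 hD2
  rw [r4, r5, r6] at hC2
  rw [r3] at hB
  have hP : !![1, 0; C l * u ^ 2, 1] * d1 * !![1, 0; C m * u ^ 2, 1]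
      = !![d1 0 0 + C m * u ^ 2 * d1 0 1, d1 0 1;
          d1 1 0 + C l * u ^ 2 * d1 0 0 + C m * u ^ 2 * d1 1 1 + C l * C m * u ^ 4 * d1 0 1,
          d1 1 1 + C l * u ^ 2 * d1 0 1] := by
    conv_lhs => rw [Matrix.eta_fin_two d1, Matrix.mul_fin_two, Matrix.mul_fin_two]
    ext1 i j
    fin_cases i <;> fin_cases j <;>
      simp only [Fin.zero_eta, Fin.mk_one, Matrix.of_apply, Matrix.cons_val', Matrix.cons_val_zero,
        Matrix.cons_val_one, Matrix.cons_val_fin_one] <;>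
      ring
  rw [hP, hA2, hD2, hC2, hB, dE6]
  ext1 i j
  fin_cases i <;> fin_cases j <;>
    simp only [Fin.zero_eta, Fin.mk_one, Matrix.of_apply, Matrix.cons_val', Matrix.cons_val_zero,
      Matrix.cons_val_one, Matrix.cons_val_fin_one, map_mul, map_pow, map_neg, map_zero] <;>
    ring
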